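/- Let q ≡ 0 (mod 3) be a prime power with q ≥ 9, and let ρ ∈ F_q be a non-square. The EA-lines of the twisted cubic C form exactly three orbits under G_q, of sizes q³ − q, (q² − 1)/2 and (q² − 1)/2, namely the orbits of the line ℓ1 through (0:1:0:0) and (0:0:1:1), the line ℓ2 through (0:1:0:0) and (1:0:1:0), and the line ℓ3 through (0:1:0:0) and (1:0:ρ:0), respectively. The stabilizer in G_q of ℓ1 is trivial; ℓ2 and ℓ3 have the same stabilizer in G_q, of order 2q, consisting exactly of the projectivities induced by the matrices with rows (1,0,0,0), (0,d,0,0), (0,−bd,d²,0), (b³,b²d,bd²,d³) with b ∈ F_q, d ∈ {1,−1}. -/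

import Mathlib

open Matrix Submodule

noncomputable section

/-- Row-vector action of an invertible matrix on subspaces of `F^4`:
a projectivity of `PG(3,q)` induced by the matrix. -/
def projAct (F : Type) [Field F] (A : GL (Fin 4) F) :
    Submodule F (Fin 4 → F) → Submodule F (Fin 4 → F) :=
  fun W => W.map (Matrix.vecMulLinear (A : Matrix (Fin 4) (Fin 4) F))

/-- Representative vectors of the points of the twisted cubic. -/
def cubicVecs (F : Type) [Field F] : Set (Fin 4 → F) :=
  {v | (∃ t : F, v = ![t ^ 3, t ^ 2, t, 1]) ∨ v = ![1, 0, 0, 0]}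

/-- The twisted cubic, as a set of projective points (1-dimensional subspaces). -/
def twistedCubic (F : Type) [Field F] : Set (Submodule F (Fin 4 → F)) :=
  (fun v => Submodule.span F {v}) '' cubicVecs F

/-- The group `G_q` of projectivities fixing the twisted cubic, modeled as those maps
on subspaces that are induced by an invertible matrix and map the cubic onto itself. -/
def Gq (F : Type) [Field F] :
    Set ((Submodule F (Fin 4 → F)) → (Submodule F (Fin 4 → F))) :=
  {f | (∃ A : GL (Fin 4) F, f = projAct F A) ∧ f '' twistedCubic F = twistedCubic F}

def isPoint (F : Type) [Field F] (W : Submodule F (Fin 4 → F)) : Prop :=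
  Module.finrank F W = 1

def isLine (F : Type) [Field F] (W : Submodule F (Fin 4 → F)) : Prop :=
  Module.finrank F W = 2

/-- The orbit of a line under `G_q`. -/
def lineOrbit (F : Type) [Field F] (ℓ : Submodule F (Fin 4 → F)) :
    Set (Submodule F (Fin 4 → F)) :=
  {m | ∃ f ∈ Gq F, f ℓ = m}

/-- The stabilizer of a line in `G_q`. -/
def lineStab (F : Type) [Field F] (ℓ : Submodule F (Fin 4 → F)) :
    Set ((Submodule F (Fin 4 → F)) → (Submodule F (Fin 4 → F))) :=
  {f ∈ Gq F | f ℓ = ℓ}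

/-- The linear form `y ↦ c0 y0 + c1 y1 + c2 y2 + c3 y3` defining a plane. -/
def planeForm (F : Type) [Field F] (c : Fin 4 → F) : (Fin 4 → F) →ₗ[F] F where
  toFun y := c 0 * y 0 + c 1 * y 1 + c 2 * y 2 + c 3 * y 3
  map_add' a b := by simp only [Pi.add_apply]; ring
  map_smul' r a := by simp only [Pi.smul_apply, smul_eq_mul, RingHom.id_apply]; ring

/-- The plane `π(c0,c1,c2,c3)`. -/
def planeOf (F : Type) [Field F] (c : Fin 4 → F) : Submodule F (Fin 4 → F) :=
  LinearMap.ker (planeForm F c)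

/-- The null polarity `𝔄`: the polar subspace of `W` w.r.t. the bilinear form
sending a point `(x0:x1:x2:x3)` to the plane `π(x3, −3x2, 3x1, −x0)`. -/
def nullPolarity (F : Type) [Field F] (W : Submodule F (Fin 4 → F)) :
    Submodule F (Fin 4 → F) :=
  ⨅ x ∈ (W : Set (Fin 4 → F)), planeOf F ![x 3, -(3 * x 2), 3 * x 1, -(x 0)]

/-- The tangent line to the twisted cubic at `P(t)`, `t ∈ F`. -/
def tangentAt (F : Type) [Field F] (t : F) : Submodule F (Fin 4 → F) :=
  Submodule.span F {![t ^ 3, t ^ 2, t, 1], ![3 * t ^ 2, 2 * t, 1, 0]}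

/-- The tangent line to the twisted cubic at `P(∞)`. -/
def tangentAtInf (F : Type) [Field F] : Submodule F (Fin 4 → F) :=
  Submodule.span F {![1, 0, 0, 0], ![0, 1, 0, 0]}

def isTangent (F : Type) [Field F] (ℓ : Submodule F (Fin 4 → F)) : Prop :=
  (∃ t : F, ℓ = tangentAt F t) ∨ ℓ = tangentAtInf F

/-- The osculating plane at `P(t)`, `t ∈ F`. -/
def oscPlane (F : Type) [Field F] (t : F) : Submodule F (Fin 4 → F) :=
  planeOf F ![1, -(3 * t), 3 * t ^ 2, -(t ^ 3)]

/-- The osculating plane at `P(∞)`. -/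
def oscPlaneInf (F : Type) [Field F] : Submodule F (Fin 4 → F) :=
  planeOf F ![0, 0, 0, 1]

def isOscPlane (F : Type) [Field F] (π : Submodule F (Fin 4 → F)) : Prop :=
  (∃ t : F, π = oscPlane F t) ∨ π = oscPlaneInf F

/-- A real chord: the line joining two distinct points of the twisted cubic. -/
def isRealChord (F : Type) [Field F] (ℓ : Submodule F (Fin 4 → F)) : Prop :=
  ∃ u ∈ cubicVecs F, ∃ v ∈ cubicVecs F,
    Submodule.span F {u} ≠ Submodule.span F {v} ∧ ℓ = Submodule.span F {u, v}

/-- A real axis: the intersection of two distinct osculating planes. -/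
def isRealAxis (F : Type) [Field F] (ℓ : Submodule F (Fin 4 → F)) : Prop :=
  ∃ π₁ π₂ : Submodule F (Fin 4 → F),
    isOscPlane F π₁ ∧ isOscPlane F π₂ ∧ π₁ ≠ π₂ ∧ ℓ = π₁ ⊓ π₂

/-- The `F_{q²}`-extension of a subspace of `F^4`. -/
def extendSub (F K : Type) [Field F] [Field K] [Algebra F K]
    (W : Submodule F (Fin 4 → F)) : Submodule K (Fin 4 → K) :=
  Submodule.span K ((fun v i => algebraMap F K (v i)) '' (W : Set (Fin 4 → F)))

/-- An external line: a line containing no point of the twisted cubic. -/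
def isExternal (F : Type) [Field F] (ℓ : Submodule F (Fin 4 → F)) : Prop :=
  isLine F ℓ ∧ ∀ P ∈ twistedCubic F, ¬ P ≤ ℓ

/-- An imaginary chord: a line disjoint from the cubic whose `F_{q²}`-extension joins a
pair of Frobenius-conjugate points `P(t)`, `P(t^q)` of the cubic over `F_{q²}`. -/
def isImagChord (F K : Type) [Field F] [Field K] [Algebra F K] (q : ℕ)
    (ℓ : Submodule F (Fin 4 → F)) : Prop :=
  isExternal F ℓ ∧
  ∃ t : K, t ∉ Set.range (algebraMap F K) ∧
    extendSub F K ℓ =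
      Submodule.span K
        ({![t ^ 3, t ^ 2, t, 1], ![(t ^ q) ^ 3, (t ^ q) ^ 2, t ^ q, 1]} :
          Set (Fin 4 → K))

/-- An imaginary axis: a line whose `F_{q²}`-extension is the intersection of a pair of
Frobenius-conjugate osculating planes `π_osc(t)`, `π_osc(t^q)` over `F_{q²}`. -/
def isImagAxis (F K : Type) [Field F] [Field K] [Algebra F K] (q : ℕ)
    (ℓ : Submodule F (Fin 4 → F)) : Prop :=
  isLine F ℓ ∧
  ∃ t : K, t ∉ Set.range (algebraMap F K) ∧
    extendSub F K ℓ =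
      planeOf K ![1, -(3 * t), 3 * t ^ 2, -(t ^ 3)] ⊓
        planeOf K ![1, -(3 * t ^ q), 3 * (t ^ q) ^ 2, -((t ^ q) ^ 3)]

/-- A unisecant: a line meeting the twisted cubic in exactly one point. -/
def isUnisecant (F : Type) [Field F] (ℓ : Submodule F (Fin 4 → F)) : Prop :=
  isLine F ℓ ∧ ∃! P, P ∈ twistedCubic F ∧ P ≤ ℓ

/-- A `UΓ`-line: a non-tangent unisecant lying in some osculating plane. -/
def isUGamma (F : Type) [Field F] (ℓ : Submodule F (Fin 4 → F)) : Prop :=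
  isUnisecant F ℓ ∧ ¬ isTangent F ℓ ∧ ∃ π, isOscPlane F π ∧ ℓ ≤ π

/-- A `UnΓ`-line: a non-tangent unisecant lying in no osculating plane. -/
def isUnGamma (F : Type) [Field F] (ℓ : Submodule F (Fin 4 → F)) : Prop :=
  isUnisecant F ℓ ∧ ¬ isTangent F ℓ ∧ ∀ π, isOscPlane F π → ¬ ℓ ≤ π

/-- An `EΓ`-line: an external line, other than an imaginary chord, lying in some
osculating plane. -/
def isEGamma (F K : Type) [Field F] [Field K] [Algebra F K] (q : ℕ)
    (ℓ : Submodule F (Fin 4 → F)) : Prop :=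
  isExternal F ℓ ∧ ¬ isImagChord F K q ℓ ∧ ∃ π, isOscPlane F π ∧ ℓ ≤ π

/-- For `q ≡ 0 (mod 3)`: the axis of `Γ`, the line `x0 = x3 = 0`. -/
def axisLine (F : Type) [Field F] : Submodule F (Fin 4 → F) :=
  Submodule.span F {![0, 1, 0, 0], ![0, 0, 1, 0]}

/-- For `q ≡ 0 (mod 3)`: an `EA`-line, i.e. an external line, other than an imaginary
chord and other than the axis of `Γ`, meeting the axis of `Γ`. -/
def isEA (F K : Type) [Field F] [Field K] [Algebra F K] (q : ℕ)
    (ℓ : Submodule F (Fin 4 → F)) : Prop :=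
  isExternal F ℓ ∧ ¬ isImagChord F K q ℓ ∧ ℓ ≠ axisLine F ∧ ℓ ⊓ axisLine F ≠ ⊥

end

/-!
The group `GL₂(F)` acts on `PG(3, F)` through the symmetric cube, permuting the points of the
twisted cubic as it permutes the projective line. When `|F| ≥ 6` every projectivity fixing the cubic
arises this way: after composing with an element of `GL₂(F)` it fixes `P(∞)` and `P(0)`, and then
the three quadrics cutting out the cubic force its matrix to be the symmetric cube of a diagonal
matrix, up to a scalar. Only scalars act trivially, so `|G_q| = q³ - q`.

In characteristic three the action preserves the axis `x₀ = x₃ = 0` and is transitive on its points.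
No chord meets the axis, because `t ↦ t³` is injective on every extension field. Hence each
`EA`-line can be moved to a line joining `(0:1:0:0)` to some `(x:0:y:z)` with `(x, z) ≠ 0`, and two
such lines are equivalent if and only if they are equivalent under upper triangular matrices. If
`z ≠ 0` the line can be normalized to `ℓ₁`, with trivial stabilizer; if `z = 0` only the class of
`y / x` modulo squares matters, and the stabilizer is induced by the substitutions `t ↦ ±t + b`.
Orbit-stabilizer gives the sizes.
-/

section SymmetricCube

variable {R : Type*} [CommRing R]

/-- The cubic Veronese map, parametrizing the affine cone over the twisted cubic:
`veronese ![t, 1]` represents `P(t)` and `veronese ![1, 0]` represents `P(∞)`. -/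
def veronese (v : Fin 2 → R) : Fin 4 → R :=
  ![v 0 ^ 3, v 0 ^ 2 * v 1, v 0 * v 1 ^ 2, v 1 ^ 3]

/-- The symmetric cube of a `2 × 2` matrix, acting on row vectors of length four. Since row vectors
are multiplied on the right while `g` acts on columns, it reverses products. -/
def symCube (g : Matrix (Fin 2) (Fin 2) R) : Matrix (Fin 4) (Fin 4) R :=
  !![g 0 0 ^ 3, g 0 0 ^ 2 * g 1 0, g 0 0 * g 1 0 ^ 2, g 1 0 ^ 3;
     3 * g 0 0 ^ 2 * g 0 1, g 0 0 ^ 2 * g 1 1 + 2 * g 0 0 * g 0 1 * g 1 0,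
       g 0 1 * g 1 0 ^ 2 + 2 * g 0 0 * g 1 0 * g 1 1, 3 * g 1 0 ^ 2 * g 1 1;
     3 * g 0 0 * g 0 1 ^ 2, g 0 1 ^ 2 * g 1 0 + 2 * g 0 0 * g 0 1 * g 1 1,
       g 0 0 * g 1 1 ^ 2 + 2 * g 0 1 * g 1 0 * g 1 1, 3 * g 1 0 * g 1 1 ^ 2;
     g 0 1 ^ 3, g 0 1 ^ 2 * g 1 1, g 0 1 * g 1 1 ^ 2, g 1 1 ^ 3]

theorem veronese_smul (k : R) (v : Fin 2 → R) : veronese (k • v) = k ^ 3 • veronese v := by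
  ext i
  fin_cases i <;> simp [veronese] <;> ring

theorem veronese_vecMul_symCube (v : Fin 2 → R) (g : Matrix (Fin 2) (Fin 2) R) :
    veronese v ᵥ* symCube g = veronese (g *ᵥ v) := by
  ext i
  fin_cases i <;>
    simp [veronese, symCube, vecMul, mulVec, dotProduct, Fin.sum_univ_four] <;> ring

theorem symCube_one : symCube (1 : Matrix (Fin 2) (Fin 2) R) = 1 := by
  ext i j
  fin_cases i <;> fin_cases j <;> simp [symCube]

theorem symCube_mul (g h : Matrix (Fin 2) (Fin 2) R) :
    symCube (g * h) = symCube h * symCube g := by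
  ext i j
  fin_cases i <;> fin_cases j <;>
    simp [symCube, mul_apply, Fin.sum_univ_four, Fin.sum_univ_two] <;> ring

/-- The symmetric cube of an invertible `2 × 2` matrix, as an invertible matrix. -/
def symCubeGL (g : GL (Fin 2) R) : GL (Fin 4) R where
  val := symCube g
  inv := symCube (g⁻¹ : GL (Fin 2) R)
  val_inv := by rw [← symCube_mul, Units.inv_mul, symCube_one]
  inv_val := by rw [← symCube_mul, Units.mul_inv, symCube_one]

@[simp]
theorem coe_symCubeGL (g : GL (Fin 2) R) :
    (symCubeGL g : Matrix (Fin 4) (Fin 4) R) = symCube (g : Matrix (Fin 2) (Fin 2) R) := rfl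

theorem symCubeGL_one : symCubeGL (1 : GL (Fin 2) R) = 1 :=
  Units.ext symCube_one

theorem symCubeGL_mul (g h : GL (Fin 2) R) : symCubeGL (g * h) = symCubeGL h * symCubeGL g :=
  Units.ext (symCube_mul _ _)

end SymmetricCube

section Projectivities

variable {F : Type} [Field F]

theorem projAct_one : projAct F 1 = id := by
  have hlin : vecMulLinear (1 : Matrix (Fin 4) (Fin 4) F) = LinearMap.id :=
    LinearMap.ext vecMul_one
  ext1 W
  rw [projAct, Units.val_one, hlin, Submodule.map_id, id]

theorem projAct_mul (A B : GL (Fin 4) F) : projAct F (A * B) = projAct F B ∘ projAct F A := by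
  have hlin : vecMulLinear (A * B : Matrix (Fin 4) (Fin 4) F) =
      vecMulLinear B.val ∘ₗ vecMulLinear A.val :=
    LinearMap.ext fun v => (vecMul_vecMul v _ _).symm
  ext1 W
  rw [projAct, Units.val_mul, hlin, Submodule.map_comp, Function.comp_apply, projAct, projAct]

theorem projAct_of_coe_eq_smul {A B : GL (Fin 4) F} {k : F} (hk : k ≠ 0)
    (h : (A : Matrix (Fin 4) (Fin 4) F) = k • (B : Matrix (Fin 4) (Fin 4) F)) :
    projAct F A = projAct F B := by
  have hlin : vecMulLinear (k • (B : Matrix (Fin 4) (Fin 4) F)) = k • vecMulLinear B.val :=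
    LinearMap.ext fun v => vecMul_smul v k B.val
  ext1 W
  rw [projAct, projAct, h, hlin, Submodule.map_smul _ _ _ hk]

theorem projAct_span_singleton (A : GL (Fin 4) F) (v : Fin 4 → F) :
    projAct F A (span F {v}) = span F {v ᵥ* (A : Matrix (Fin 4) (Fin 4) F)} := by
  rw [projAct, map_span, Set.image_singleton, vecMulLinear_apply]

theorem projAct_span_pair_le_iff (A : GL (Fin 4) F) {u v : Fin 4 → F}
    {W : Submodule F (Fin 4 → F)} :
    projAct F A (span F {u, v}) ≤ W ↔
      u ᵥ* (A : Matrix (Fin 4) (Fin 4) F) ∈ W ∧ v ᵥ* (A : Matrix (Fin 4) (Fin 4) F) ∈ W := by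
  simp [projAct, map_span_le]

theorem vecMulLinear_injective (A : GL (Fin 4) F) :
    Function.Injective (vecMulLinear (A : Matrix (Fin 4) (Fin 4) F)) :=
  vecMul_injective_of_isUnit A.isUnit

theorem projAct_injective (A : GL (Fin 4) F) : Function.Injective (projAct F A) :=
  map_injective_of_injective (vecMulLinear_injective A)

theorem projAct_le_projAct_iff (A : GL (Fin 4) F) {V W : Submodule F (Fin 4 → F)} :
    projAct F A V ≤ projAct F A W ↔ V ≤ W :=
  map_le_map_iff_of_injective (vecMulLinear_injective A) V W

theorem projAct_inf (A : GL (Fin 4) F) (V W : Submodule F (Fin 4 → F)) :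
    projAct F A (V ⊓ W) = projAct F A V ⊓ projAct F A W :=
  map_inf _ (vecMulLinear_injective A)

theorem projAct_eq_bot_iff (A : GL (Fin 4) F) {V : Submodule F (Fin 4 → F)} :
    projAct F A V = ⊥ ↔ V = ⊥ :=
  (projAct_injective A).eq_iff' (Submodule.map_bot _)

theorem finrank_projAct (A : GL (Fin 4) F) (V : Submodule F (Fin 4 → F)) :
    Module.finrank F (projAct F A V) = Module.finrank F V :=
  (equivMapOfInjective _ (vecMulLinear_injective A) V).finrank_eq.symm

theorem vecMul_mem_projAct_iff (A : GL (Fin 4) F) {v : Fin 4 → F} {V : Submodule F (Fin 4 → F)} :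
    v ᵥ* (A : Matrix (Fin 4) (Fin 4) F) ∈ projAct F A V ↔ v ∈ V :=
  (vecMulLinear_injective A).mem_set_image

theorem eq_iff_le_of_isLine {V W : Submodule F (Fin 4 → F)} (hV : isLine F V) (hW : isLine F W) :
    V = W ↔ V ≤ W :=
  ⟨le_of_eq, fun h => eq_of_le_of_finrank_eq h (hV.trans hW.symm)⟩

theorem isLine_projAct_iff (A : GL (Fin 4) F) {V : Submodule F (Fin 4 → F)} :
    isLine F (projAct F A V) ↔ isLine F V := by
  rw [isLine, finrank_projAct, isLine]

end Projectivities

section CubicPoints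

variable {F : Type} [Field F]

/-- The point of the twisted cubic with homogeneous parameter `v`. -/
def cubicPoint (v : Fin 2 → F) : Submodule F (Fin 4 → F) :=
  span F {veronese v}

theorem cubicPoint_smul {k : F} (hk : k ≠ 0) (v : Fin 2 → F) :
    cubicPoint (k • v) = cubicPoint v := by
  rw [cubicPoint, veronese_smul, span_singleton_smul_eq (IsUnit.mk0 _ (pow_ne_zero 3 hk)),
    cubicPoint]

theorem exists_smul_eq_of_mul_eq_mul {v w : Fin 2 → F} (hv : v ≠ 0) (hw : w ≠ 0)
    (h : v 0 * w 1 = v 1 * w 0) : ∃ k : F, k ≠ 0 ∧ k • v = w := by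
  obtain ⟨i, hi⟩ := Function.ne_iff.1 hv
  have hkv : (w i / v i) • v = w := by
    ext j
    rw [Pi.smul_apply, smul_eq_mul, div_mul_eq_mul_div, div_eq_iff hi]
    fin_cases i <;> fin_cases j <;> grind
  exact ⟨w i / v i, fun hk => hw (by rw [← hkv, hk, zero_smul]), hkv⟩

theorem cubicPoint_eq_iff {v w : Fin 2 → F} (hv : v ≠ 0) (hw : w ≠ 0) :
    cubicPoint v = cubicPoint w ↔ v 0 * w 1 = v 1 * w 0 := by
  constructor
  · intro h
    obtain ⟨k, hk⟩ := span_singleton_eq_span_singleton.1 h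
    have h0 : k.val * v 0 ^ 3 = w 0 ^ 3 := congrFun hk 0
    have h1 : k.val * (v 0 ^ 2 * v 1) = w 0 ^ 2 * w 1 := congrFun hk 1
    have h2 : k.val * (v 0 * v 1 ^ 2) = w 0 * w 1 ^ 2 := congrFun hk 2
    have h3 : k.val * v 1 ^ 3 = w 1 ^ 3 := congrFun hk 3
    have hcube : (v 0 * w 1 - v 1 * w 0) ^ 3 = 0 := by
      linear_combination v 1 ^ 3 * h0 - 3 * v 0 * v 1 ^ 2 * h1 + 3 * v 0 ^ 2 * v 1 * h2 -
        v 0 ^ 3 * h3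
    exact sub_eq_zero.1 (pow_eq_zero_iff three_ne_zero |>.1 hcube)
  · intro h
    obtain ⟨k, hk, rfl⟩ := exists_smul_eq_of_mul_eq_mul hv hw h
    exact (cubicPoint_smul hk v).symm

theorem cubicPoint_mem_twistedCubic {v : Fin 2 → F} (hv : v ≠ 0) :
    cubicPoint v ∈ twistedCubic F := by
  by_cases h1 : v 1 = 0
  · refine ⟨![1, 0, 0, 0], Or.inr rfl, ?_⟩
    have hinf : cubicPoint (![1, 0] : Fin 2 → F) = cubicPoint v :=
      (cubicPoint_eq_iff (by simp) hv).2 (by simp [h1])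
    simpa [cubicPoint, veronese] using hinf
  · refine ⟨![(v 0 / v 1) ^ 3, (v 0 / v 1) ^ 2, v 0 / v 1, 1], Or.inl ⟨_, rfl⟩, ?_⟩
    have haff : cubicPoint ![v 0 / v 1, 1] = cubicPoint v :=
      (cubicPoint_eq_iff (by simp) hv).2 (by simp [h1])
    simpa [cubicPoint, veronese] using haff

theorem mem_twistedCubic_iff {P : Submodule F (Fin 4 → F)} :
    P ∈ twistedCubic F ↔ ∃ v, v ≠ 0 ∧ cubicPoint v = P := by
  constructor
  · rintro ⟨x, ⟨t, rfl⟩ | rfl, rfl⟩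
    · exact ⟨![t, 1], by simp, by simp [cubicPoint, veronese]⟩
    · exact ⟨![1, 0], by simp, by simp [cubicPoint, veronese]⟩
  · rintro ⟨v, hv, rfl⟩
    exact cubicPoint_mem_twistedCubic hv

end CubicPoints

section CubicGroup

variable {F : Type} [Field F]

/-- The action of `GL₂` on subspaces of `F⁴` through the symmetric cube. -/
def cubicPerm : GL (Fin 2) F →* Equiv.Perm (Submodule F (Fin 4 → F)) :=
  MonoidHom.toHomPerm
    { toFun g := projAct F (symCubeGL g)
      map_one' := by rw [symCubeGL_one, projAct_one]; rfl
      map_mul' g h := by rw [symCubeGL_mul, projAct_mul]; rfl }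

theorem coe_cubicPerm (g : GL (Fin 2) F) : ⇑(cubicPerm g) = projAct F (symCubeGL g) := rfl

theorem cubicPerm_cubicPoint (g : GL (Fin 2) F) (v : Fin 2 → F) :
    cubicPerm g (cubicPoint v) = cubicPoint ((g : Matrix (Fin 2) (Fin 2) F) *ᵥ v) := by
  rw [coe_cubicPerm, cubicPoint, projAct_span_singleton, coe_symCubeGL, veronese_vecMul_symCube,
    cubicPoint]

theorem mulVec_ne_zero (g : GL (Fin 2) F) {v : Fin 2 → F} (hv : v ≠ 0) :
    (g : Matrix (Fin 2) (Fin 2) F) *ᵥ v ≠ 0 := by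
  rw [← mulVec_zero (g : Matrix (Fin 2) (Fin 2) F)]
  exact (mulVec_injective_of_isUnit g.isUnit).ne hv

theorem mapsTo_cubicPerm (g : GL (Fin 2) F) :
    Set.MapsTo (cubicPerm g) (twistedCubic F) (twistedCubic F) := by
  intro P hP
  obtain ⟨v, hv, rfl⟩ := mem_twistedCubic_iff.1 hP
  rw [cubicPerm_cubicPoint]
  exact cubicPoint_mem_twistedCubic (mulVec_ne_zero g hv)

theorem cubicPerm_mem_Gq (g : GL (Fin 2) F) : ⇑(cubicPerm g) ∈ Gq F := by
  refine ⟨⟨symCubeGL g, rfl⟩, (mapsTo_cubicPerm g).image_subset.antisymm fun P hP => ?_⟩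
  exact ⟨cubicPerm g⁻¹ P, mapsTo_cubicPerm g⁻¹ hP, by
    rw [map_inv]; exact (cubicPerm g).apply_symm_apply P⟩

theorem comp_mem_Gq {f₁ f₂ : Submodule F (Fin 4 → F) → Submodule F (Fin 4 → F)}
    (h₁ : f₁ ∈ Gq F) (h₂ : f₂ ∈ Gq F) : f₁ ∘ f₂ ∈ Gq F := by
  obtain ⟨⟨A, rfl⟩, hA⟩ := h₁
  obtain ⟨⟨B, rfl⟩, hB⟩ := h₂
  exact ⟨⟨B * A, (projAct_mul B A).symm⟩, by rw [Set.image_comp, hB, hA]⟩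

theorem exists_cubicPerm_cubicPoint_eq {v w : Fin 2 → F} (hv : v ≠ 0) (hw : w ≠ 0)
    (h : cubicPoint v ≠ cubicPoint w) :
    ∃ g : GL (Fin 2) F, cubicPerm g (cubicPoint ![1, 0]) = cubicPoint v ∧
      cubicPerm g (cubicPoint ![0, 1]) = cubicPoint w := by
  have hdet : !![v 0, w 0; v 1, w 1].det ≠ 0 := by
    rw [det_fin_two_of, sub_ne_zero, mul_comm (w 0)]
    exact mt (cubicPoint_eq_iff hv hw).2 h
  refine ⟨GeneralLinearGroup.mkOfDetNeZero _ hdet, ?_, ?_⟩ <;>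
  · rw [cubicPerm_cubicPoint]
    congr 1
    ext i
    fin_cases i <;> simp [GeneralLinearGroup.mkOfDetNeZero, mulVec, dotProduct]

end CubicGroup

section Classification

variable {F : Type} [Field F]

/-- The three quadrics whose intersection is the affine cone over the twisted cubic. -/
def OnCubicQuadrics (x : Fin 4 → F) : Prop :=
  x 0 * x 2 = x 1 ^ 2 ∧ x 1 * x 3 = x 2 ^ 2 ∧ x 0 * x 3 = x 1 * x 2

theorem onCubicQuadrics_of_mem_cubicPoint {x : Fin 4 → F} {v : Fin 2 → F}
    (hx : x ∈ cubicPoint v) : OnCubicQuadrics x := by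
  obtain ⟨k, rfl⟩ := mem_span_singleton.1 hx
  refine ⟨?_, ?_, ?_⟩ <;> simp [veronese] <;> ring

theorem eq_zero_of_forall_sum_mul_pow_eq_zero {n : ℕ} (hn : n ≤ Cardinal.mk F) {c : Fin n → F}
    (hc : ∀ t : F, ∑ i, c i * t ^ (i : ℕ) = 0) : c = 0 := by
  rw [← Cardinal.mk_fin, Cardinal.le_def] at hn
  obtain ⟨f⟩ := hn
  exact eq_zero_of_forall_index_sum_mul_pow_eq_zero f.injective fun j => hc (f j)

theorem coeff_eq_zero_of_forall_quintic_eq_zero (hF : 6 ≤ Cardinal.mk F) {c₁ c₂ c₃ c₄ c₅ : F}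
    (h : ∀ t : F, c₁ * t + c₂ * t ^ 2 + c₃ * t ^ 3 + c₄ * t ^ 4 + c₅ * t ^ 5 = 0) :
    c₁ = 0 ∧ c₂ = 0 ∧ c₃ = 0 ∧ c₄ = 0 ∧ c₅ = 0 := by
  have hc : ![0, c₁, c₂, c₃, c₄, c₅] = 0 :=
    eq_zero_of_forall_sum_mul_pow_eq_zero (by exact_mod_cast hF) fun t => by
      simpa [Fin.sum_univ_six] using h t
  exact ⟨congrFun hc 1, congrFun hc 2, congrFun hc 3, congrFun hc 4, congrFun hc 5⟩

theorem veronese_vecMul_of_rows_eq {B : Matrix (Fin 4) (Fin 4) F} {α δ : F}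
    (h0 : B 0 = ![α, 0, 0, 0]) (h3 : B 3 = ![0, 0, 0, δ]) (t : F) :
    veronese ![t, 1] ᵥ* B =
      ![α * t ^ 3 + B 1 0 * t ^ 2 + B 2 0 * t, B 1 1 * t ^ 2 + B 2 1 * t,
        B 1 2 * t ^ 2 + B 2 2 * t, B 1 3 * t ^ 2 + B 2 3 * t + δ] := by
  ext i
  fin_cases i <;> simp [veronese, vecMul, dotProduct, Fin.sum_univ_four, h0, h3] <;> ring

theorem eq_diagonal_of_onCubicQuadrics (hF : 6 ≤ Cardinal.mk F) {B : Matrix (Fin 4) (Fin 4) F}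
    {α δ : F} (hα : α ≠ 0) (hδ : δ ≠ 0) (h0 : B 0 = ![α, 0, 0, 0]) (h3 : B 3 = ![0, 0, 0, δ])
    (hB : ∀ t : F, OnCubicQuadrics (veronese ![t, 1] ᵥ* B)) :
    B = diagonal ![α, B 1 1, B 2 2, δ] ∧ B 1 1 * δ = B 2 2 ^ 2 ∧ α * δ = B 1 1 * B 2 2 := by
  simp only [veronese_vecMul_of_rows_eq h0 h3, OnCubicQuadrics, cons_val] at hB
  -- Along the cubic each quadric pulls back to a polynomial of degree at most five in `t`, so for
  -- six or more values of `t` all its coefficients vanish.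
  obtain ⟨-, -, -, -, h12⟩ := coeff_eq_zero_of_forall_quintic_eq_zero hF
    (c₁ := 0) (c₂ := B 2 0 * B 2 2 - B 2 1 ^ 2)
    (c₃ := B 1 0 * B 2 2 + B 2 0 * B 1 2 - 2 * B 1 1 * B 2 1)
    (c₄ := α * B 2 2 + B 1 0 * B 1 2 - B 1 1 ^ 2) (c₅ := α * B 1 2)
    fun t => by linear_combination (hB t).1
  obtain ⟨h21, hquad₂, -, -, -⟩ := coeff_eq_zero_of_forall_quintic_eq_zero hF
    (c₁ := B 2 1 * δ) (c₂ := B 1 1 * δ + B 2 1 * B 2 3 - B 2 2 ^ 2)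
    (c₃ := B 1 1 * B 2 3 + B 2 1 * B 1 3 - 2 * B 1 2 * B 2 2)
    (c₄ := B 1 1 * B 1 3 - B 1 2 ^ 2) (c₅ := 0)
    fun t => by linear_combination (hB t).2.1
  obtain ⟨h20, h10, hquad₃, h23, h13⟩ := coeff_eq_zero_of_forall_quintic_eq_zero hF
    (c₁ := B 2 0 * δ) (c₂ := B 1 0 * δ + B 2 0 * B 2 3 - B 2 1 * B 2 2)
    (c₃ := α * δ + B 1 0 * B 2 3 + B 2 0 * B 1 3 - B 1 1 * B 2 2 - B 2 1 * B 1 2)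
    (c₄ := α * B 2 3 + B 1 0 * B 1 3 - B 1 1 * B 1 2) (c₅ := α * B 1 3)
    fun t => by linear_combination (hB t).2.2
  have h12 : B 1 2 = 0 := by simpa [hα] using h12
  have h13 : B 1 3 = 0 := by simpa [hα] using h13
  have h20 : B 2 0 = 0 := by simpa [hδ] using h20
  have h21 : B 2 1 = 0 := by simpa [hδ] using h21
  have h10 : B 1 0 = 0 := by simpa [hδ, h20, h21] using h10
  have h23 : B 2 3 = 0 := by simpa [hα, h12, h13] using h23
  have h11 : B 1 1 * δ = B 2 2 ^ 2 := by simpa [h21, sub_eq_zero] using hquad₂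
  have h00 : α * δ = B 1 1 * B 2 2 := by simpa [h10, h20, h21, sub_eq_zero] using hquad₃
  refine ⟨?_, h11, h00⟩
  ext i j
  fin_cases i <;> fin_cases j <;> simp [*]

theorem exists_smul_symCube_diagonal_eq {α β γ δ : F} (hα : α ≠ 0) (hδ : δ ≠ 0)
    (hβ : β * δ = γ ^ 2) (hγ : α * δ = β * γ) :
    ∃ μ : F, μ ≠ 0 ∧ diagonal ![α, β, γ, δ] = δ • symCube (diagonal ![μ, 1]) := by
  have hγ0 : γ ≠ 0 := fun h => mul_ne_zero hα hδ (by rw [hγ, h, mul_zero])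
  refine ⟨γ / δ, div_ne_zero hγ0 hδ, ?_⟩
  ext i j
  fin_cases i <;> fin_cases j <;> simp [symCube] <;> field_simp <;> grind

theorem exists_cubicPerm_eq_of_fixed (hF : 6 ≤ Cardinal.mk F)
    {f : Submodule F (Fin 4 → F) → Submodule F (Fin 4 → F)} (hf : f ∈ Gq F)
    (hinf : f (cubicPoint ![1, 0]) = cubicPoint ![1, 0])
    (hzero : f (cubicPoint ![0, 1]) = cubicPoint ![0, 1]) :
    ∃ g : GL (Fin 2) F, ⇑(cubicPerm g) = f := by
  obtain ⟨⟨B, rfl⟩, hB⟩ := hf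
  rw [cubicPoint, projAct_span_singleton, eq_comm, span_singleton_eq_span_singleton] at hinf hzero
  obtain ⟨α, hinf⟩ := hinf
  obtain ⟨δ, hzero⟩ := hzero
  have h0 : B.val 0 = ![α.val, 0, 0, 0] := by
    ext j
    have hj := congrFun hinf j
    fin_cases j <;>
      simpa [veronese, vecMul, dotProduct, Fin.sum_univ_four, Units.smul_def, eq_comm] using hj
  have h3 : B.val 3 = ![0, 0, 0, δ.val] := by
    ext j
    have hj := congrFun hzero j
    fin_cases j <;>
      simpa [veronese, vecMul, dotProduct, Fin.sum_univ_four, Units.smul_def, eq_comm] using hj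
  have hquad (t : F) : OnCubicQuadrics (veronese ![t, 1] ᵥ* B.val) := by
    obtain ⟨w, -, hw⟩ := mem_twistedCubic_iff.1 (hB ▸ Set.mem_image_of_mem (projAct F B)
      (cubicPoint_mem_twistedCubic (v := ![t, 1]) (by simp)))
    rw [cubicPoint.eq_def ![t, 1], projAct_span_singleton] at hw
    exact onCubicQuadrics_of_mem_cubicPoint (hw ▸ mem_span_singleton_self _)
  obtain ⟨hdiag, h11, h00⟩ :=
    eq_diagonal_of_onCubicQuadrics hF α.ne_zero δ.ne_zero h0 h3 hquad
  obtain ⟨μ, hμ, hsym⟩ := exists_smul_symCube_diagonal_eq α.ne_zero δ.ne_zero h11 h00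
  have hdet : (diagonal ![μ, 1]).det ≠ 0 := by simpa using hμ
  exact ⟨GeneralLinearGroup.mkOfDetNeZero _ hdet,
    (projAct_of_coe_eq_smul δ.ne_zero (hdiag.trans hsym)).symm⟩

theorem mem_Gq_iff (hF : 6 ≤ Cardinal.mk F)
    {f : Submodule F (Fin 4 → F) → Submodule F (Fin 4 → F)} :
    f ∈ Gq F ↔ ∃ g : GL (Fin 2) F, ⇑(cubicPerm g) = f := by
  refine ⟨fun hf => ?_, fun ⟨g, hg⟩ => hg ▸ cubicPerm_mem_Gq g⟩
  have hmaps {v : Fin 2 → F} (hv : v ≠ 0) : ∃ w, w ≠ 0 ∧ cubicPoint w = f (cubicPoint v) :=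
    mem_twistedCubic_iff.1 (hf.2 ▸ Set.mem_image_of_mem f (cubicPoint_mem_twistedCubic hv))
  obtain ⟨v, hv, hfv⟩ := hmaps (v := ![1, 0]) (by simp)
  obtain ⟨w, hw, hfw⟩ := hmaps (v := ![0, 1]) (by simp)
  have hne : cubicPoint v ≠ cubicPoint w := by
    obtain ⟨A, rfl⟩ := hf.1
    rw [hfv, hfw, (projAct_injective A).ne_iff, Ne, cubicPoint_eq_iff] <;> simp
  obtain ⟨g, hgv, hgw⟩ := exists_cubicPerm_cubicPoint_eq hv hw hne
  obtain ⟨h, hh⟩ := exists_cubicPerm_eq_of_fixed hF (comp_mem_Gq (cubicPerm_mem_Gq g⁻¹) hf)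
    (by rw [Function.comp_apply, ← hfv, ← hgv, map_inv]; exact (cubicPerm g).symm_apply_apply _)
    (by rw [Function.comp_apply, ← hfw, ← hgw, map_inv]; exact (cubicPerm g).symm_apply_apply _)
  refine ⟨g * h, ?_⟩
  rw [map_mul, Equiv.Perm.coe_mul, hh, map_inv, ← Function.comp_assoc]
  exact congrArg (· ∘ f) (cubicPerm g).self_comp_symm

end Classification

section GroupOrder

variable {F : Type} [Field F]

theorem mem_range_scalar_iff {g : GL (Fin 2) F} :
    g ∈ (GeneralLinearGroup.scalar (Fin 2)).range ↔ g 0 1 = 0 ∧ g 1 0 = 0 ∧ g 0 0 = g 1 1 := by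
  constructor
  · rintro ⟨u, rfl⟩
    simp
  · rintro ⟨h01, h10, h11⟩
    have h00 : g 0 0 ≠ 0 := fun h => g.det_ne_zero (by rw [det_fin_two, h, h01]; ring)
    refine ⟨Units.mk0 _ h00, ?_⟩
    ext i j
    fin_cases i <;> fin_cases j <;> simp [*]

theorem cubicPerm_scalar (u : Fˣ) : cubicPerm (GeneralLinearGroup.scalar (Fin 2) u) = 1 := by
  have hsmul : symCube (Matrix.scalar (Fin 2) u.val) = (u.val ^ 3) • 1 := by
    ext i j
    fin_cases i <;> fin_cases j <;> simp [symCube] <;> ring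
  refine DFunLike.coe_injective ?_
  rw [coe_cubicPerm, projAct_of_coe_eq_smul (B := 1) (pow_ne_zero 3 u.ne_zero) hsmul, projAct_one,
    Equiv.Perm.coe_one]

theorem cubicPerm_eq_one_iff {g : GL (Fin 2) F} :
    cubicPerm g = 1 ↔ g 0 1 = 0 ∧ g 1 0 = 0 ∧ g 0 0 = g 1 1 := by
  constructor
  · intro hg
    have hfix {v : Fin 2 → F} (hv : v ≠ 0) :
        (g.val *ᵥ v) 0 * v 1 = (g.val *ᵥ v) 1 * v 0 := by
      rw [← cubicPoint_eq_iff (mulVec_ne_zero g hv) hv, ← cubicPerm_cubicPoint, hg,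
        Equiv.Perm.one_apply]
    have h01 : g 0 1 = 0 := by simpa using hfix (v := ![0, 1]) (by simp)
    have h10 : g 1 0 = 0 := by simpa using (hfix (v := ![1, 0]) (by simp)).symm
    have h11 : g 0 0 + g 0 1 = g 1 0 + g 1 1 := by
      simpa [mulVec, dotProduct] using hfix (v := ![1, 1]) (by simp)
    exact ⟨h01, h10, by simpa [h01, h10] using h11⟩
  · intro hg
    obtain ⟨u, rfl⟩ := mem_range_scalar_iff.2 hg
    exact cubicPerm_scalar u

theorem ker_cubicPerm :
    (cubicPerm (F := F)).ker = (GeneralLinearGroup.scalar (Fin 2) (R := F)).range := by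
  ext g
  rw [MonoidHom.mem_ker, cubicPerm_eq_one_iff, mem_range_scalar_iff]

theorem card_ker_cubicPerm : Nat.card (cubicPerm (F := F)).ker = Nat.card F - 1 := by
  have hinj : Function.Injective (GeneralLinearGroup.scalar (Fin 2) (R := F)) := fun u v h =>
    Units.ext (by simpa using congrArg (fun g : GL (Fin 2) F => g 0 0) h)
  rw [ker_cubicPerm, ← Nat.card_units]
  exact (Nat.card_congr (MonoidHom.ofInjective hinj).toEquiv).symm

theorem card_range_cubicPerm [Finite F] :
    Nat.card (cubicPerm (F := F)).range = Nat.card F ^ 3 - Nat.card F := by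
  have := Fintype.ofFinite F
  have hcard := (cubicPerm (F := F)).ker.card_mul_index
  rw [Subgroup.index_ker, card_ker_cubicPerm, card_GL_field, Fin.prod_univ_two,
    ← Nat.card_eq_fintype_card] at hcard
  obtain ⟨m, hm⟩ := Nat.exists_eq_add_of_lt (Finite.one_lt_card (α := F))
  rw [hm] at hcard ⊢
  refine Nat.eq_of_mul_eq_mul_left (Nat.succ_pos m) ?_
  calc (m + 1) * _ = ((1 + m + 1) ^ 2 - 1) * ((1 + m + 1) ^ 2 - (1 + m + 1)) := by
        convert hcard using 2 <;> simp [add_comm]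
    _ = (m + 1) * ((1 + m + 1) ^ 3 - (1 + m + 1)) := by
        rw [Nat.sub_eq_of_eq_add (c := (m + 1) * (m + 3)) (by ring),
          Nat.sub_eq_of_eq_add (c := (m + 2) * (m + 1)) (by ring),
          Nat.sub_eq_of_eq_add (c := (m + 2) * (m + 1) * (m + 3)) (by ring)]
        ring

theorem lineOrbit_eq_orbit (hF : 6 ≤ Cardinal.mk F) (ℓ : Submodule F (Fin 4 → F)) :
    lineOrbit F ℓ = MulAction.orbit (cubicPerm (F := F)).range ℓ := by
  ext m
  simp only [lineOrbit, mem_Gq_iff hF]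
  simp [MulAction.mem_orbit_iff]

theorem lineStab_eq_image_stabilizer (hF : 6 ≤ Cardinal.mk F) (ℓ : Submodule F (Fin 4 → F)) :
    lineStab F ℓ = (fun p : (cubicPerm (F := F)).range => ⇑p.1) ''
      MulAction.stabilizer (cubicPerm (F := F)).range ℓ := by
  ext f
  simp only [lineStab, mem_Gq_iff hF]
  constructor
  · rintro ⟨⟨g, rfl⟩, hg⟩
    exact ⟨⟨cubicPerm g, g, rfl⟩, hg, rfl⟩
  · rintro ⟨⟨_, g, rfl⟩, hg, rfl⟩
    exact ⟨⟨g, rfl⟩, hg⟩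

theorem ncard_lineOrbit_mul_ncard_lineStab [Finite F] (hF : 6 ≤ Cardinal.mk F)
    (ℓ : Submodule F (Fin 4 → F)) :
    (lineOrbit F ℓ).ncard * (lineStab F ℓ).ncard = Nat.card F ^ 3 - Nat.card F := by
  have hinj : Function.Injective fun p : (cubicPerm (F := F)).range => ⇑p.1 :=
    DFunLike.coe_injective.comp Subtype.val_injective
  rw [lineOrbit_eq_orbit hF, lineStab_eq_image_stabilizer hF, ← MulAction.index_stabilizer,
    Set.ncard_image_of_injective _ hinj, ← card_range_cubicPerm]
  exact Subgroup.index_mul_card _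

end GroupOrder

section Axis

theorem vecMul_symCube_of_charP_three {R : Type*} [CommRing R] [CharP R 3] (v : Fin 4 → R)
    (g : Matrix (Fin 2) (Fin 2) R) :
    v ᵥ* symCube g =
      ![v 0 * g 0 0 ^ 3 + v 3 * g 0 1 ^ 3,
        v 0 * g 0 0 ^ 2 * g 1 0 + g.det * (g 0 0 * v 1 - g 0 1 * v 2) + v 3 * g 0 1 ^ 2 * g 1 1,
        v 0 * g 0 0 * g 1 0 ^ 2 + g.det * (g 1 1 * v 2 - g 1 0 * v 1) + v 3 * g 0 1 * g 1 1 ^ 2,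
        v 0 * g 1 0 ^ 3 + v 3 * g 1 1 ^ 3] := by
  have h3 : (3 : R) = 0 := CharP.ofNat_eq_zero R 3
  ext j
  fin_cases j <;> simp [symCube, vecMul, dotProduct, Fin.sum_univ_four, det_fin_two, h3] <;> grind

variable {F : Type} [Field F]

theorem mem_axisLine_iff {v : Fin 4 → F} : v ∈ axisLine F ↔ v 0 = 0 ∧ v 3 = 0 := by
  rw [axisLine, mem_span_pair]
  constructor
  · rintro ⟨a, b, rfl⟩
    simp
  · rintro ⟨h0, h3⟩
    refine ⟨v 1, v 2, ?_⟩
    ext i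
    fin_cases i <;> simp [h0, h3]

theorem isLine_axisLine : isLine F (axisLine F) := by
  have hind : LinearIndependent F ![(![0, 1, 0, 0] : Fin 4 → F), ![0, 0, 1, 0]] := by
    simp [LinearIndependent.pair_iff]
  rw [isLine, axisLine, ← Matrix.range_cons_cons_empty, finrank_span_eq_card hind, Fintype.card_fin]

theorem cubicPerm_axisLine [CharP F 3] (g : GL (Fin 2) F) :
    cubicPerm g (axisLine F) = axisLine F := by
  refine eq_of_le_of_finrank_eq ?_ (finrank_projAct (symCubeGL g) _)
  rintro _ ⟨v, hv, rfl⟩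
  obtain ⟨h0, h3⟩ := mem_axisLine_iff.1 hv
  simp [mem_axisLine_iff, vecMul_symCube_of_charP_three, h0, h3]

theorem eq_zero_of_mem_span_cubic_pair [CharP F 3] {t s : F} {v : Fin 4 → F}
    (hv : v ∈ span F {![t ^ 3, t ^ 2, t, 1], ![s ^ 3, s ^ 2, s, 1]}) (h0 : v 0 = 0)
    (h3 : v 3 = 0) : v = 0 := by
  obtain ⟨a, b, rfl⟩ := mem_span_pair.1 hv
  have hab : a + b = 0 := by simpa using h3
  have hcube : a * t ^ 3 + b * s ^ 3 = 0 := by simpa using h0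
  obtain rfl : b = -a := (neg_eq_of_add_eq_zero_right hab).symm
  have hts : a = 0 ∨ t = s := by
    have hfrob : a * (t - s) ^ 3 = 0 := by
      rw [sub_pow_char]
      linear_combination hcube
    simpa [sub_eq_zero] using hfrob
  obtain rfl | rfl := hts <;> simp

theorem not_isImagChord_of_inf_axisLine_ne_bot [CharP F 3] {K : Type} [Field K] [Algebra F K]
    {n : ℕ} {ℓ : Submodule F (Fin 4 → F)} (h : ℓ ⊓ axisLine F ≠ ⊥) : ¬ isImagChord F K n ℓ := by
  rintro ⟨-, t, -, ht⟩
  have : CharP K 3 := charP_of_injective_algebraMap (algebraMap F K).injective 3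
  obtain ⟨v, ⟨hvℓ, hvaxis⟩, hv⟩ := exists_mem_ne_zero_of_ne_bot h
  obtain ⟨h0, h3⟩ := mem_axisLine_iff.1 hvaxis
  have hmem : (fun i => algebraMap F K (v i)) ∈ extendSub F K ℓ :=
    subset_span (Set.mem_image_of_mem _ hvℓ)
  have hzero := eq_zero_of_mem_span_cubic_pair (ht ▸ hmem) (by simp [h0]) (by simp [h3])
  exact hv (funext fun i => (algebraMap F K).injective (by simpa using congrFun hzero i))

theorem isEA_iff [CharP F 3] {K : Type} [Field K] [Algebra F K] {n : ℕ}
    {ℓ : Submodule F (Fin 4 → F)} :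
    isEA F K n ℓ ↔ isExternal F ℓ ∧ ℓ ≠ axisLine F ∧ ℓ ⊓ axisLine F ≠ ⊥ :=
  ⟨fun h => ⟨h.1, h.2.2⟩, fun h => ⟨h.1, not_isImagChord_of_inf_axisLine_ne_bot h.2.2, h.2⟩⟩

theorem isExternal_cubicPerm {ℓ : Submodule F (Fin 4 → F)} (h : isExternal F ℓ)
    (g : GL (Fin 2) F) : isExternal F (cubicPerm g ℓ) := by
  refine ⟨(isLine_projAct_iff _).2 h.1, fun P hP hle => ?_⟩
  rw [← (cubicPerm_mem_Gq g).2] at hP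
  obtain ⟨Q, hQ, rfl⟩ := hP
  exact h.2 Q hQ ((projAct_le_projAct_iff _).1 hle)

theorem isEA_cubicPerm [CharP F 3] {K : Type} [Field K] [Algebra F K] {n : ℕ}
    {ℓ : Submodule F (Fin 4 → F)} (h : isEA F K n ℓ) (g : GL (Fin 2) F) :
    isEA F K n (cubicPerm g ℓ) := by
  obtain ⟨hext, hne, hmeet⟩ := isEA_iff.1 h
  refine isEA_iff.2 ⟨isExternal_cubicPerm hext g, fun h => hne ?_, fun h => hmeet ?_⟩
  · exact (cubicPerm g).injective (h.trans (cubicPerm_axisLine g).symm)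
  · rw [← cubicPerm_axisLine g, coe_cubicPerm, ← projAct_inf, projAct_eq_bot_iff] at h
    exact h

end Axis

section Pencil

variable {F : Type} [Field F]

/-- The line joining the point `(0:1:0:0)` of the axis to `(x:0:y:z)`. -/
def pencilLine (x y z : F) : Submodule F (Fin 4 → F) :=
  span F {![0, 1, 0, 0], ![x, 0, y, z]}

theorem mem_pencilLine_iff {x y z : F} {v : Fin 4 → F} :
    v ∈ pencilLine x y z ↔ ∃ k, v 0 = k * x ∧ v 2 = k * y ∧ v 3 = k * z := by
  rw [pencilLine, mem_span_pair]
  constructor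
  · rintro ⟨a, k, rfl⟩
    exact ⟨k, by simp⟩
  · rintro ⟨k, h0, h2, h3⟩
    refine ⟨v 1, k, ?_⟩
    ext i
    fin_cases i <;> simp [h0, h2, h3]

theorem isLine_pencilLine {x y z : F} (h : x ≠ 0 ∨ y ≠ 0 ∨ z ≠ 0) :
    isLine F (pencilLine x y z) := by
  have hind : LinearIndependent F ![(![0, 1, 0, 0] : Fin 4 → F), ![x, 0, y, z]] := by
    rw [LinearIndependent.pair_iff]
    intro a k hk
    have ha : a = 0 := by simpa using congrFun hk 1
    have hx : k = 0 ∨ x = 0 := by simpa using congrFun hk 0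
    have hy : k = 0 ∨ y = 0 := by simpa using congrFun hk 2
    have hz : k = 0 ∨ z = 0 := by simpa using congrFun hk 3
    exact ⟨ha, by tauto⟩
  rw [isLine, pencilLine, ← Matrix.range_cons_cons_empty, finrank_span_eq_card hind,
    Fintype.card_fin]

theorem exists_eq_pencilLine {ℓ : Submodule F (Fin 4 → F)} (hℓ : isLine F ℓ)
    (hmem : ![0, 1, 0, 0] ∈ ℓ) (hne : ℓ ≠ axisLine F) :
    ∃ x y z, (x ≠ 0 ∨ z ≠ 0) ∧ ℓ = pencilLine x y z := by
  have hnle : ¬ ℓ ≤ axisLine F := fun hle =>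
    hne ((eq_iff_le_of_isLine hℓ isLine_axisLine).2 hle)
  obtain ⟨w, hw, hwaxis⟩ := SetLike.not_le_iff_exists.1 hnle
  have hxz : w 0 ≠ 0 ∨ w 3 ≠ 0 := by rwa [mem_axisLine_iff, not_and_or] at hwaxis
  have hproj : ![w 0, 0, w 2, w 3] = w - w 1 • ![0, 1, 0, 0] := by
    ext i
    fin_cases i <;> simp
  have hle : pencilLine (w 0) (w 2) (w 3) ≤ ℓ := by
    rw [pencilLine, span_le, Set.pair_subset_iff, hproj]
    exact ⟨hmem, ℓ.sub_mem hw (ℓ.smul_mem (w 1) hmem)⟩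
  exact ⟨w 0, w 2, w 3, hxz,
    ((eq_iff_le_of_isLine (isLine_pencilLine (hxz.imp_right Or.inr)) hℓ).2 hle).symm⟩

theorem exists_mem_cubicPerm [CharP F 3] {ℓ : Submodule F (Fin 4 → F)}
    (h : ℓ ⊓ axisLine F ≠ ⊥) : ∃ g : GL (Fin 2) F, ![0, 1, 0, 0] ∈ cubicPerm g ℓ := by
  obtain ⟨v, ⟨hvℓ, hvaxis⟩, hv⟩ := exists_mem_ne_zero_of_ne_bot h
  obtain ⟨h0, h3⟩ := mem_axisLine_iff.1 hvaxis
  obtain ⟨a, b, hdet⟩ : ∃ a b : F, !![a, b; v 2, v 1].det ≠ 0 := by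
    by_cases h1 : v 1 = 0
    · have h2 : v 2 ≠ 0 := fun h2 => hv (by ext i; fin_cases i <;> simp [*])
      exact ⟨0, 1, by simpa using h2⟩
    · exact ⟨1, 0, by simpa using h1⟩
  have hmem : v ᵥ* symCube !![a, b; v 2, v 1] ∈
      cubicPerm (GeneralLinearGroup.mkOfDetNeZero _ hdet) ℓ :=
    (vecMul_mem_projAct_iff (symCubeGL (GeneralLinearGroup.mkOfDetNeZero _ hdet))).2 hvℓ
  have himage : v ᵥ* symCube !![a, b; v 2, v 1] =
      (!![a, b; v 2, v 1].det ^ 2) • ![0, 1, 0, 0] := by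
    rw [vecMul_symCube_of_charP_three, h0, h3]
    ext i
    fin_cases i <;> simp [det_fin_two_of] <;> grind
  exact ⟨_, (smul_mem_iff _ (pow_ne_zero 2 hdet)).1 (himage ▸ hmem)⟩

theorem cubicPerm_pencilLine_eq_iff [CharP F 3] {g : GL (Fin 2) F} {x y z x' y' z' : F}
    (h : x ≠ 0 ∨ y ≠ 0 ∨ z ≠ 0) (h' : x' ≠ 0 ∨ z' ≠ 0) :
    cubicPerm g (pencilLine x y z) = pencilLine x' y' z' ↔
      g 1 0 = 0 ∧ ∃ k, x * g 0 0 ^ 3 + z * g 0 1 ^ 3 = k * x' ∧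
        (g 0 0 * y + g 0 1 * z) * g 1 1 ^ 2 = k * y' ∧ z * g 1 1 ^ 3 = k * z' := by
  rw [coe_cubicPerm, eq_iff_le_of_isLine ((isLine_projAct_iff _).2 (isLine_pencilLine h))
      (isLine_pencilLine (h'.imp_right Or.inr)), pencilLine.eq_def x y z,
    projAct_span_pair_le_iff, coe_symCubeGL]
  simp only [vecMul_symCube_of_charP_three, mem_pencilLine_iff, cons_val, det_fin_two]
  have hdet : g 0 0 * g 1 1 - g 0 1 * g 1 0 ≠ 0 := by
    rw [← det_fin_two]
    exact g.det_ne_zero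
  constructor
  · rintro ⟨⟨k₀, h0, h2, h3⟩, k, hx, hy, hz⟩
    have hk₀ : k₀ = 0 := by grind
    have hc : g 1 0 = 0 := by simpa [hk₀, hdet] using h2
    simp only [hc] at hx hy hz
    exact ⟨hc, k, hx, by linear_combination hy, by linear_combination hz⟩
  · rintro ⟨hc, k, hx, hy, hz⟩
    simp only [hc]
    exact ⟨⟨0, by simp⟩, k, hx, by linear_combination hy, by linear_combination hz⟩

theorem cubicPerm_pencilLine_one_zero_eq_iff [CharP F 3] {g : GL (Fin 2) F} {r r' : F} :
    cubicPerm g (pencilLine 1 r 0) = pencilLine 1 r' 0 ↔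
      g 1 0 = 0 ∧ r * g 1 1 ^ 2 = r' * g 0 0 ^ 2 := by
  rw [cubicPerm_pencilLine_eq_iff (by simp) (by simp)]
  refine and_congr_right fun hc => ?_
  have ha : g 0 0 ≠ 0 := fun h => g.det_ne_zero (by rw [det_fin_two, h, hc]; ring)
  constructor
  · rintro ⟨k, hx, hy, -⟩
    refine mul_left_cancel₀ ha ?_
    linear_combination hy - r' * hx
  · intro h
    exact ⟨g 0 0 ^ 3, by ring, by linear_combination g 0 0 * h, by ring⟩

theorem cubicPerm_pencilLine_zero_one_one_eq_self_iff [CharP F 3] {g : GL (Fin 2) F} :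
    cubicPerm g (pencilLine 0 1 1) = pencilLine 0 1 1 ↔
      g 0 1 = 0 ∧ g 1 0 = 0 ∧ g 0 0 = g 1 1 := by
  rw [cubicPerm_pencilLine_eq_iff (by simp) (by simp)]
  constructor
  · rintro ⟨hc, k, hx, hy, hz⟩
    have hb : g 0 1 = 0 := by simpa using hx
    have hd : g 1 1 ≠ 0 := fun h => g.det_ne_zero (by rw [det_fin_two, h, hc]; ring)
    refine ⟨hb, hc, mul_right_cancel₀ (pow_ne_zero 2 hd) ?_⟩
    linear_combination hy - hz - g 1 1 ^ 2 * hb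
  · rintro ⟨hb, hc, had⟩
    exact ⟨hc, g 1 1 ^ 3, by simp [hb], by rw [hb, had]; ring, by ring⟩

theorem cubicPerm_pencilLine_zero_one_one_ne [CharP F 3] (g : GL (Fin 2) F) (r : F) :
    cubicPerm g (pencilLine 0 1 1) ≠ pencilLine 1 r 0 := by
  rw [Ne, cubicPerm_pencilLine_eq_iff (by simp) (by simp)]
  rintro ⟨hc, k, -, -, hz⟩
  have hd : g 1 1 = 0 := by simpa using hz
  exact g.det_ne_zero (by rw [det_fin_two, hc, hd]; ring)

theorem isExternal_pencilLine_iff [CharP F 3] [PerfectRing F 3] {p y s : F} (h : p ≠ 0 ∨ s ≠ 0) :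
    isExternal F (pencilLine (p ^ 3) y (s ^ 3)) ↔ y ≠ p * s ^ 2 := by
  have hline : isLine F (pencilLine (p ^ 3) y (s ^ 3)) :=
    isLine_pencilLine (h.imp (pow_ne_zero 3) fun hs => Or.inr (pow_ne_zero 3 hs))
  have hle {v : Fin 2 → F} : cubicPoint v ≤ pencilLine (p ^ 3) y (s ^ 3) ↔
      ∃ k, v 0 ^ 3 = k * p ^ 3 ∧ v 0 * v 1 ^ 2 = k * y ∧ v 1 ^ 3 = k * s ^ 3 := by
    rw [cubicPoint, span_singleton_le_iff_mem, mem_pencilLine_iff]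
    rfl
  rw [isExternal, and_iff_right hline]
  constructor
  · rintro hext rfl
    refine hext _ (cubicPoint_mem_twistedCubic (v := ![p, s]) ?_) (hle.2 ⟨1, by simp⟩)
    simpa [or_iff_not_imp_left] using h
  · intro hy P hP hPle
    obtain ⟨v, hv, rfl⟩ := mem_twistedCubic_iff.1 hP
    obtain ⟨k, h0, h1, h2⟩ := hle.1 hPle
    obtain ⟨j, rfl⟩ := surjective_frobenius F 3 k
    rw [frobenius_def] at *
    have hv0 : v 0 = j * p := frobenius_inj F 3 (by simpa [frobenius_def, mul_pow] using h0)
    have hv1 : v 1 = j * s := frobenius_inj F 3 (by simpa [frobenius_def, mul_pow] using h2)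
    have hj : j ≠ 0 := by
      rintro rfl
      exact hv (by ext i; fin_cases i <;> simp [hv0, hv1])
    refine hy (mul_left_cancel₀ (pow_ne_zero 3 hj) ?_)
    rw [← h1, hv0, hv1]
    ring

theorem isEA_pencilLine_iff [CharP F 3] [PerfectRing F 3] {K : Type} [Field K] [Algebra F K]
    {n : ℕ} {p y s : F} (h : p ≠ 0 ∨ s ≠ 0) :
    isEA F K n (pencilLine (p ^ 3) y (s ^ 3)) ↔ y ≠ p * s ^ 2 := by
  rw [isEA_iff, isExternal_pencilLine_iff h, and_iff_left]
  constructor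
  · intro heq
    have hmem : ![p ^ 3, 0, y, s ^ 3] ∈ axisLine F := heq ▸ mem_pencilLine_iff.2 ⟨1, by simp⟩
    obtain ⟨h0, h3⟩ := mem_axisLine_iff.1 hmem
    exact h.elim (· (by simpa using h0)) (· (by simpa using h3))
  · exact (Submodule.ne_bot_iff _).2 ⟨![0, 1, 0, 0],
      ⟨mem_pencilLine_iff.2 ⟨0, by simp⟩, mem_axisLine_iff.2 ⟨rfl, rfl⟩⟩, by simp⟩

end Pencil

section LineOrbits

variable {F : Type} [Field F]

theorem lineOrbit_eq_lineOrbit_iff (hF : 6 ≤ Cardinal.mk F) {ℓ m : Submodule F (Fin 4 → F)} :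
    lineOrbit F ℓ = lineOrbit F m ↔ ∃ g : GL (Fin 2) F, cubicPerm g m = ℓ := by
  rw [lineOrbit_eq_orbit hF, lineOrbit_eq_orbit hF, MulAction.orbit_eq_iff]
  simp [MulAction.mem_orbit_iff]

theorem mem_lineOrbit_iff (hF : 6 ≤ Cardinal.mk F) {ℓ m : Submodule F (Fin 4 → F)} :
    m ∈ lineOrbit F ℓ ↔ ∃ g : GL (Fin 2) F, cubicPerm g m = ℓ := by
  rw [← lineOrbit_eq_lineOrbit_iff hF, eq_comm, lineOrbit_eq_orbit hF, lineOrbit_eq_orbit hF,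
    MulAction.orbit_eq_iff]

/-- The matrix of the affine substitution fixing `P(∞)`; modulo scalars these matrices make up the
stabilizer of `P(∞)` in `GL₂`. -/
def shiftScale (b : F) (d : Fˣ) : GL (Fin 2) F :=
  GeneralLinearGroup.mkOfDetNeZero !![1, b; 0, d.val] (by simp)

@[simp]
theorem coe_shiftScale (b : F) (d : Fˣ) :
    (shiftScale b d : Matrix (Fin 2) (Fin 2) F) = !![1, b; 0, d.val] := rfl

theorem exists_cubicPerm_shiftScale_eq {g : GL (Fin 2) F} (hg : g 1 0 = 0) :
    ∃ (b : F) (d : Fˣ), cubicPerm (shiftScale b d) = cubicPerm g := by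
  have hdet : g 0 0 * g 1 1 ≠ 0 := by simpa [det_fin_two, hg] using g.det_ne_zero
  let a := Units.mk0 _ (left_ne_zero_of_mul hdet)
  let d := Units.mk0 _ (right_ne_zero_of_mul hdet)
  have hfactor : g = GeneralLinearGroup.scalar (Fin 2) a * shiftScale (g 0 1 / a) (d / a) := by
    ext i j
    fin_cases i <;> fin_cases j <;> simp [hg, a, d, mul_div_cancel₀, left_ne_zero_of_mul hdet]
  exact ⟨_, _, by rw [hfactor, map_mul, cubicPerm_scalar, one_mul]⟩

theorem cubicPerm_shiftScale_injective :
    Function.Injective fun p : F × Fˣ => ⇑(cubicPerm (shiftScale p.1 p.2)) := by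
  rintro ⟨b, d⟩ ⟨b', d'⟩ h
  have hone : cubicPerm ((shiftScale b d)⁻¹ * shiftScale b' d') = 1 := by
    rw [map_mul, map_inv, DFunLike.coe_injective h, inv_mul_cancel]
  obtain ⟨u, hu⟩ := mem_range_scalar_iff.2 (cubicPerm_eq_one_iff.1 hone)
  rw [eq_inv_mul_iff_mul_eq] at hu
  have hentry (i j : Fin 2) : (shiftScale b d * GeneralLinearGroup.scalar (Fin 2) u) i j =
      shiftScale b' d' i j := by rw [hu]
  have h00 : u = 1 := by simpa using hentry 0 0
  have h01 : b = b' := by simpa [h00] using hentry 0 1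
  have h11 : d = d' := by simpa [h00, Units.ext_iff] using hentry 1 1
  rw [h01, h11]

end LineOrbits

section FiniteField

theorem charP_three_of_dvd_card {F : Type*} [Field F] [Fintype F] (h : 3 ∣ Fintype.card F) :
    CharP F 3 := by
  have : Fact (Nat.Prime 3) := ⟨Nat.prime_three⟩
  refine (CharP.charP_iff_prime_eq_zero Nat.prime_three).2 ?_
  by_contra h3
  exact not_isUnit_prime_of_dvd_card h (isUnit_iff_ne_zero.2 h3)

theorem isSquare_mul_of_not_isSquare {F : Type*} [Field F] [Finite F] {a b : F}
    (ha : ¬ IsSquare a) (hb : ¬ IsSquare b) : IsSquare (a * b) := by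
  classical
  have := Fintype.ofFinite F
  have hab : a * b ≠ 0 :=
    mul_ne_zero (fun h => ha (h ▸ IsSquare.zero)) fun h => hb (h ▸ IsSquare.zero)
  rw [← quadraticChar_neg_one_iff_not_isSquare] at ha hb
  rw [← quadraticChar_one_iff_isSquare hab, map_mul, ha, hb, neg_mul_neg, one_mul]

theorem exists_mul_sq_eq_or_eq_mul {F : Type*} [Field F] [Finite F] {ρ : F} (hρ : ¬ IsSquare ρ)
    {x y : F} (hx : x ≠ 0) (hy : y ≠ 0) : ∃ d : Fˣ, y * d ^ 2 = x ∨ y * d ^ 2 = x * ρ := by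
  have hmk {z d : F} (hz : z ≠ 0) (hd : z / y = d * d) : ∃ u : Fˣ, y * u ^ 2 = z := by
    have hd0 : d ≠ 0 := fun h => div_ne_zero hz hy (by rw [hd, h, zero_mul])
    exact ⟨Units.mk0 d hd0, by rw [Units.val_mk0, sq, ← hd, mul_div_cancel₀ _ hy]⟩
  by_cases hsq : IsSquare (x / y)
  · obtain ⟨d, hd⟩ := hsq
    obtain ⟨u, hu⟩ := hmk hx hd
    exact ⟨u, Or.inl hu⟩
  · obtain ⟨d, hd⟩ := isSquare_mul_of_not_isSquare hsq hρ
    have hρ0 : ρ ≠ 0 := fun h => hρ (h ▸ IsSquare.zero)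
    obtain ⟨u, hu⟩ := hmk (mul_ne_zero hx hρ0) ((mul_div_right_comm x ρ y).trans hd)
    exact ⟨u, Or.inr hu⟩

end FiniteField

section EALines

variable {F : Type} [Field F] [CharP F 3]

theorem exists_cubicPerm_eq_pencilLine_zero_one_one {p y s : F} (hs : s ≠ 0) (hy : y ≠ p * s ^ 2) :
    ∃ g : GL (Fin 2) F, cubicPerm g (pencilLine (p ^ 3) y (s ^ 3)) = pencilLine 0 1 1 := by
  have hd : (y - p * s ^ 2) / s ^ 3 ≠ 0 := div_ne_zero (sub_ne_zero.2 hy) (pow_ne_zero 3 hs)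
  refine ⟨shiftScale (-p / s) (Units.mk0 _ hd), ?_⟩
  rw [cubicPerm_pencilLine_eq_iff (by simp [hs]) (by simp)]
  refine ⟨rfl, s ^ 3 * ((y - p * s ^ 2) / s ^ 3) ^ 3, ?_, ?_, ?_⟩ <;> simp <;> field_simp <;> ring

theorem exists_cubicPerm_eq_pencilLine_one_zero [Finite F] {ρ : F} (hρ : ¬ IsSquare ρ) {x y : F}
    (hx : x ≠ 0) (hy : y ≠ 0) :
    ∃ g : GL (Fin 2) F, cubicPerm g (pencilLine x y 0) = pencilLine 1 1 0 ∨
      cubicPerm g (pencilLine x y 0) = pencilLine 1 ρ 0 := by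
  obtain ⟨d, hd⟩ := exists_mul_sq_eq_or_eq_mul hρ hx hy
  refine ⟨shiftScale 0 d, hd.imp (fun hd => ?_) fun hd => ?_⟩ <;>
  · rw [cubicPerm_pencilLine_eq_iff (by simp [hx]) (by simp)]
    exact ⟨rfl, x, by simp [hd]⟩

variable {K : Type} [Field K] [Algebra F K] {n : ℕ}

theorem isEA_pencilLine_zero_one_one [PerfectRing F 3] : isEA F K n (pencilLine 0 1 1) := by
  simpa using (isEA_pencilLine_iff (K := K) (n := n) (p := (0 : F)) (y := 1) (s := 1) (by simp)).2

theorem isEA_pencilLine_one_zero [PerfectRing F 3] {r : F} (hr : r ≠ 0) :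
    isEA F K n (pencilLine 1 r 0) := by
  simpa [hr] using
    (isEA_pencilLine_iff (K := K) (n := n) (p := (1 : F)) (y := r) (s := 0) (by simp)).2

theorem exists_cubicPerm_eq_of_isEA [Finite F] {ρ : F} (hρ : ¬ IsSquare ρ)
    {ℓ : Submodule F (Fin 4 → F)} (hℓ : isEA F K n ℓ) :
    ∃ g : GL (Fin 2) F, cubicPerm g ℓ = pencilLine 0 1 1 ∨ cubicPerm g ℓ = pencilLine 1 1 0 ∨
      cubicPerm g ℓ = pencilLine 1 ρ 0 := by
  obtain ⟨g, hg⟩ := exists_mem_cubicPerm (isEA_iff.1 hℓ).2.2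
  have hEA := isEA_cubicPerm hℓ g
  obtain ⟨x, y, z, hxz, heq⟩ := exists_eq_pencilLine hEA.1.1 hg hEA.2.2.1
  obtain ⟨p, rfl⟩ := surjective_frobenius F 3 x
  obtain ⟨s, rfl⟩ := surjective_frobenius F 3 z
  simp only [frobenius_def, ne_eq, pow_eq_zero_iff three_ne_zero] at hxz heq
  rw [heq, isEA_pencilLine_iff hxz] at hEA
  by_cases hs : s = 0
  · obtain ⟨h, hh⟩ := exists_cubicPerm_eq_pencilLine_one_zero hρ (x := p ^ 3) (y := y)
      (by simpa [hs] using hxz) (by simpa [hs] using hEA)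
    exact ⟨h * g, Or.inr (by simpa [heq, hs] using hh)⟩
  · obtain ⟨h, hh⟩ := exists_cubicPerm_eq_pencilLine_zero_one_one hs hEA
    exact ⟨h * g, Or.inl (by simpa [heq] using hh)⟩

theorem setOf_isEA_eq [Finite F] (hF : 6 ≤ Cardinal.mk F) {ρ : F} (hρ : ¬ IsSquare ρ) :
    {ℓ | isEA F K n ℓ} = lineOrbit F (pencilLine 0 1 1) ∪ lineOrbit F (pencilLine 1 1 0) ∪
      lineOrbit F (pencilLine 1 ρ 0) := by
  have hρ0 : ρ ≠ 0 := fun h => hρ (h ▸ IsSquare.zero)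
  have horbit {ℓ m : Submodule F (Fin 4 → F)} (hm : isEA F K n m) (hℓ : ℓ ∈ lineOrbit F m) :
      isEA F K n ℓ := by
    obtain ⟨f, hf, rfl⟩ := hℓ
    obtain ⟨g, rfl⟩ := (mem_Gq_iff hF).1 hf
    exact isEA_cubicPerm hm g
  refine Set.Subset.antisymm (fun ℓ hℓ => ?_) ?_
  · obtain ⟨g, h | h | h⟩ := exists_cubicPerm_eq_of_isEA hρ hℓ
    · exact Or.inl (Or.inl ((mem_lineOrbit_iff hF).2 ⟨g, h⟩))
    · exact Or.inl (Or.inr ((mem_lineOrbit_iff hF).2 ⟨g, h⟩))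
    · exact Or.inr ((mem_lineOrbit_iff hF).2 ⟨g, h⟩)
  · rintro ℓ ((hℓ | hℓ) | hℓ)
    · exact horbit isEA_pencilLine_zero_one_one hℓ
    · exact horbit (isEA_pencilLine_one_zero one_ne_zero) hℓ
    · exact horbit (isEA_pencilLine_one_zero hρ0) hℓ

theorem lineStab_pencilLine_zero_one_one (hF : 6 ≤ Cardinal.mk F) :
    lineStab F (pencilLine 0 1 1) = {id} := by
  ext f
  rw [lineStab, Set.mem_sep_iff, mem_Gq_iff hF, Set.mem_singleton_iff]
  constructor
  · rintro ⟨⟨g, rfl⟩, hg⟩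
    rw [cubicPerm_eq_one_iff.2 (cubicPerm_pencilLine_zero_one_one_eq_self_iff.1 hg),
      Equiv.Perm.coe_one]
  · rintro rfl
    exact ⟨⟨1, by rw [map_one, Equiv.Perm.coe_one]⟩, rfl⟩

theorem lineOrbit_pencilLine_zero_one_one_ne (hF : 6 ≤ Cardinal.mk F) (r : F) :
    lineOrbit F (pencilLine 0 1 1) ≠ lineOrbit F (pencilLine 1 r 0) := by
  rw [ne_comm, Ne, lineOrbit_eq_lineOrbit_iff hF]
  exact fun ⟨g, hg⟩ => cubicPerm_pencilLine_zero_one_one_ne g r hg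

theorem lineOrbit_pencilLine_one_zero_ne (hF : 6 ≤ Cardinal.mk F) {ρ : F} (hρ : ¬ IsSquare ρ) :
    lineOrbit F (pencilLine 1 1 0) ≠ lineOrbit F (pencilLine 1 ρ 0) := by
  rw [ne_comm, Ne, lineOrbit_eq_lineOrbit_iff hF]
  rintro ⟨g, hg⟩
  obtain ⟨hc, hsq⟩ := cubicPerm_pencilLine_one_zero_eq_iff.1 hg
  have ha : g 0 0 ≠ 0 := fun h => g.det_ne_zero (by rw [det_fin_two, h, hc]; ring)
  refine hρ ⟨g 1 1 / g 0 0, ?_⟩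
  rw [← sq, div_pow, eq_div_iff (pow_ne_zero 2 ha), ← hsq, one_mul]

theorem symCube_shiftScale (b : F) (d : Fˣ) :
    symCube (shiftScale b d : Matrix (Fin 2) (Fin 2) F) =
      !![1, 0, 0, 0;
         0, d.val, 0, 0;
         0, -(b * d), d ^ 2, 0;
         b ^ 3, b ^ 2 * d, b * d ^ 2, d ^ 3] := by
  have h3 : (3 : F) = 0 := CharP.ofNat_eq_zero F 3
  ext i j
  fin_cases i <;> fin_cases j <;> simp [symCube, h3]
  linear_combination b * d * h3

theorem lineStab_pencilLine_one_zero (hF : 6 ≤ Cardinal.mk F) {r : F} (hr : r ≠ 0) :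
    lineStab F (pencilLine 1 r 0) =
      (fun p : F × Fˣ => ⇑(cubicPerm (shiftScale p.1 p.2))) '' (Set.univ ×ˢ {1, -1}) := by
  have hfix (b : F) (d : Fˣ) :
      cubicPerm (shiftScale b d) (pencilLine 1 r 0) = pencilLine 1 r 0 ↔
        d ∈ ({1, -1} : Set Fˣ) := by
    rw [cubicPerm_pencilLine_one_zero_eq_iff]
    have hval : d ∈ ({1, -1} : Set Fˣ) ↔ d.val = 1 ∨ d.val = -1 :=
      or_congr Units.ext_iff Units.ext_iff
    simp [hr, hval]
  ext f
  rw [lineStab, Set.mem_sep_iff, mem_Gq_iff hF]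
  constructor
  · rintro ⟨⟨g, rfl⟩, hg⟩
    obtain ⟨b, d, hbd⟩ :=
      exists_cubicPerm_shiftScale_eq (cubicPerm_pencilLine_one_zero_eq_iff.1 hg).1
    rw [← hbd] at hg ⊢
    exact ⟨(b, d), ⟨trivial, (hfix b d).1 hg⟩, rfl⟩
  · rintro ⟨⟨b, d⟩, ⟨-, hd⟩, rfl⟩
    exact ⟨⟨_, rfl⟩, (hfix b d).2 hd⟩

theorem lineStab_pencilLine_one_zero_eq_setOf_projAct (hF : 6 ≤ Cardinal.mk F) {r : F}
    (hr : r ≠ 0) :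
    lineStab F (pencilLine 1 r 0) =
      {f | ∃ b d : F, (d = 1 ∨ d = -1) ∧ ∃ A : GL (Fin 4) F,
        (↑A : Matrix (Fin 4) (Fin 4) F) =
          !![1, 0, 0, 0;
             0, d, 0, 0;
             0, -(b * d), d ^ 2, 0;
             b ^ 3, b ^ 2 * d, b * d ^ 2, d ^ 3] ∧
        f = projAct F A} := by
  rw [lineStab_pencilLine_one_zero hF hr]
  ext f
  constructor
  · rintro ⟨⟨b, d⟩, ⟨-, hd⟩, rfl⟩
    exact ⟨b, d, hd.imp (congrArg Units.val) (congrArg Units.val), symCubeGL (shiftScale b d),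
      symCube_shiftScale b d, rfl⟩
  · rintro ⟨b, d, hd, A, hA, rfl⟩
    have hd0 : d ≠ 0 := by rintro rfl; simp at hd
    refine ⟨(b, Units.mk0 d hd0), ⟨trivial, hd.imp Units.ext Units.ext⟩, ?_⟩
    have hAsym : symCubeGL (shiftScale b (Units.mk0 d hd0)) = A :=
      Units.ext ((symCube_shiftScale b _).trans hA.symm)
    exact congrArg (projAct F) hAsym

theorem ncard_lineStab_pencilLine_one_zero (hF : 6 ≤ Cardinal.mk F) {r : F} (hr : r ≠ 0) :
    (lineStab F (pencilLine 1 r 0)).ncard = 2 * Nat.card F := by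
  have : Fact (2 < 3) := ⟨by norm_num⟩
  have hne : (1 : Fˣ) ≠ -1 := fun h =>
    CharP.neg_one_ne_one F 3 (by simpa using (congrArg Units.val h).symm)
  rw [lineStab_pencilLine_one_zero hF hr,
    Set.ncard_image_of_injective _ cubicPerm_shiftScale_injective, Set.ncard_prod, Set.ncard_univ,
    Set.ncard_pair hne, mul_comm]

theorem ncard_lineOrbit_pencilLine_zero_one_one [Finite F] (hF : 6 ≤ Cardinal.mk F) :
    (lineOrbit F (pencilLine 0 1 1)).ncard = Nat.card F ^ 3 - Nat.card F := by
  rw [← ncard_lineOrbit_mul_ncard_lineStab hF (pencilLine 0 1 1),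
    lineStab_pencilLine_zero_one_one hF, Set.ncard_singleton, mul_one]

theorem ncard_lineOrbit_pencilLine_one_zero [Finite F] (hF : 6 ≤ Cardinal.mk F) {r : F}
    (hr : r ≠ 0) : (lineOrbit F (pencilLine 1 r 0)).ncard = (Nat.card F ^ 2 - 1) / 2 := by
  have hmul := ncard_lineOrbit_mul_ncard_lineStab hF (pencilLine 1 r 0)
  rw [ncard_lineStab_pencilLine_one_zero hF hr] at hmul
  refine Nat.eq_div_of_mul_eq_left two_ne_zero ?_
  refine Nat.eq_of_mul_eq_mul_left (Nat.card_pos (α := F)) ?_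
  calc Nat.card F * (_ * 2) = _ * (2 * Nat.card F) := by ring
    _ = Nat.card F ^ 3 - Nat.card F := hmul
    _ = Nat.card F * (Nat.card F ^ 2 - 1) := by rw [Nat.mul_sub, mul_one, ← pow_succ']

end EALines

theorem stmt_19 (q : ℕ) (F : Type) [Field F] [Fintype F]
    (hcard : Fintype.card F = q) (K : Type) [Field K] [Fintype K] [Algebra F K] (hcardK : Fintype.card K = q ^ 2) (hq : 9 ≤ q) (hq3 : q % 3 = 0)
    (ρ : F) (hρ : ¬ ∃ s : F, s ^ 2 = ρ) :
    {ℓ : Submodule F (Fin 4 → F) | isEA F K q ℓ} =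
      lineOrbit F (Submodule.span F ({![0, 1, 0, 0], ![0, 0, 1, 1]} : Set (Fin 4 → F))) ∪ lineOrbit F (Submodule.span F ({![0, 1, 0, 0], ![1, 0, 1, 0]} : Set (Fin 4 → F))) ∪ lineOrbit F (Submodule.span F ({![0, 1, 0, 0], ![1, 0, ρ, 0]} : Set (Fin 4 → F))) ∧
    lineOrbit F (Submodule.span F ({![0, 1, 0, 0], ![0, 0, 1, 1]} : Set (Fin 4 → F))) ≠ lineOrbit F (Submodule.span F ({![0, 1, 0, 0], ![1, 0, 1, 0]} : Set (Fin 4 → F))) ∧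
    lineOrbit F (Submodule.span F ({![0, 1, 0, 0], ![0, 0, 1, 1]} : Set (Fin 4 → F))) ≠ lineOrbit F (Submodule.span F ({![0, 1, 0, 0], ![1, 0, ρ, 0]} : Set (Fin 4 → F))) ∧
    lineOrbit F (Submodule.span F ({![0, 1, 0, 0], ![1, 0, 1, 0]} : Set (Fin 4 → F))) ≠ lineOrbit F (Submodule.span F ({![0, 1, 0, 0], ![1, 0, ρ, 0]} : Set (Fin 4 → F))) ∧
    (lineOrbit F (Submodule.span F ({![0, 1, 0, 0], ![0, 0, 1, 1]} : Set (Fin 4 → F)))).ncard = q ^ 3 - q ∧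
    (lineOrbit F (Submodule.span F ({![0, 1, 0, 0], ![1, 0, 1, 0]} : Set (Fin 4 → F)))).ncard = (q ^ 2 - 1) / 2 ∧
    (lineOrbit F (Submodule.span F ({![0, 1, 0, 0], ![1, 0, ρ, 0]} : Set (Fin 4 → F)))).ncard = (q ^ 2 - 1) / 2 ∧
    lineStab F (Submodule.span F ({![0, 1, 0, 0], ![0, 0, 1, 1]} : Set (Fin 4 → F))) = {id} ∧
    lineStab F (Submodule.span F ({![0, 1, 0, 0], ![1, 0, 1, 0]} : Set (Fin 4 → F))) = lineStab F (Submodule.span F ({![0, 1, 0, 0], ![1, 0, ρ, 0]} : Set (Fin 4 → F))) ∧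
    (lineStab F (Submodule.span F ({![0, 1, 0, 0], ![1, 0, 1, 0]} : Set (Fin 4 → F)))).ncard = 2 * q ∧
    lineStab F (Submodule.span F ({![0, 1, 0, 0], ![1, 0, 1, 0]} : Set (Fin 4 → F))) =
      {f | ∃ b d : F, (d = 1 ∨ d = -1) ∧ ∃ A : GL (Fin 4) F,
        (↑A : Matrix (Fin 4) (Fin 4) F) =
          !![1, 0, 0, 0;
             0, d, 0, 0;
             0, -(b * d), d ^ 2, 0;
             b ^ 3, b ^ 2 * d, b * d ^ 2, d ^ 3] ∧
        f = projAct F A} := by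
  subst hcard
  have hρ : ¬ IsSquare ρ := fun ⟨s, hs⟩ => hρ ⟨s, (sq s).trans hs.symm⟩
  have hρ0 : ρ ≠ 0 := fun h => hρ (h ▸ IsSquare.zero)
  have : CharP F 3 := charP_three_of_dvd_card (Nat.dvd_of_mod_eq_zero hq3)
  have hF : 6 ≤ Cardinal.mk F := by
    rw [Cardinal.mk_fintype]
    exact_mod_cast (by norm_num : 6 ≤ 9).trans hq
  rw [← Nat.card_eq_fintype_card]
  exact ⟨setOf_isEA_eq hF hρ, lineOrbit_pencilLine_zero_one_one_ne hF 1,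
    lineOrbit_pencilLine_zero_one_one_ne hF ρ, lineOrbit_pencilLine_one_zero_ne hF hρ,
    ncard_lineOrbit_pencilLine_zero_one_one hF, ncard_lineOrbit_pencilLine_one_zero hF one_ne_zero,
    ncard_lineOrbit_pencilLine_one_zero hF hρ0, lineStab_pencilLine_zero_one_one hF,
    (lineStab_pencilLine_one_zero hF one_ne_zero).trans (lineStab_pencilLine_one_zero hF hρ0).symm,
    ncard_lineStab_pencilLine_one_zero hF one_ne_zero,
    lineStab_pencilLine_one_zero_eq_setOf_projAct hF one_ne_zero⟩
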